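/- arXiv:2107.06324 — 2 statements merged into one kernel-verified Lean document; each statement's English description precedes it below -/
import Mathlib

section
/- Let d ≥ 2 and let θ: [0,∞) → [0,∞) be nondecreasing with θ(r) → 0 as r → 0+. Let φ: ℝ^{d-1} → ℝ be C¹ with ‖∇φ‖_∞ ≤ 1 and |∇φ(x) − ∇φ(y)| ≤ θ(|x−y|) for all x, y; let D = {(x,t) : t > φ(x)}. Let u : D → ℝ, let N ≥ 1 be an integer, and let ε : (0,∞) → [0,∞) satisfy ε(r) → 0 as r → 0+. Let X_j = (x_j, φ(x_j)) be boundary points with X_j → X₀ = (x₀, φ(x₀)) as j → ∞, and suppose there are R > 0, C > 0 and, for each j ∈ ℕ ∪ {0}, a homogeneous harmonic polynomial P_j of degree N on ℝ^d such that |u(X) − P_j(X − X_j)| ≤ C |X − X_j|^N ε(|X − X_j|) for all X ∈ B_R(X_j) ∩ D. Then P_j → P₀ uniformly on B_1(0); consequently, since the homogeneous polynomials of degree N form a finite-dimensional space, P_j → P₀ together with all derivatives uniformly on compact subsets of ℝ^d (i.e. in C^k-topology for every k). -/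
open MeasureTheory Set Metric Filter

noncomputable section

abbrev E (n : ℕ) := EuclideanSpace ℝ (Fin (n + 1))
abbrev Eb (n : ℕ) := EuclideanSpace ℝ (Fin n)

/-- last coordinate -/
def lastC {n : ℕ} (X : E n) : ℝ := X (Fin.last n)

/-- first `n` coordinates -/
def initC {n : ℕ} (X : E n) : Eb n :=
  (EuclideanSpace.equiv (Fin n) ℝ).symm (fun i => X i.castSucc)

/-- the point `(x, t)` of `ℝ^{n+1}` -/
def graphPt {n : ℕ} (x : Eb n) (t : ℝ) : E n :=
  (EuclideanSpace.equiv (Fin (n + 1)) ℝ).symm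
    (Fin.snoc ((EuclideanSpace.equiv (Fin n) ℝ) x) t)

/-- the region above the graph of `φ` -/
def Dom {n : ℕ} (φ : Eb n → ℝ) : Set (E n) := {X | φ (initC X) < lastC X}

/-- `P` is a homogeneous harmonic polynomial of degree `N` on `ℝ^d`. -/
def IsHomHarmPoly {d : ℕ} (N : ℕ) (P : EuclideanSpace ℝ (Fin d) → ℝ) : Prop :=
  (∃ p : MvPolynomial (Fin d) ℝ, ∀ x, P x = MvPolynomial.eval (fun i => x i) p) ∧
  (∀ l : ℝ, 0 < l → ∀ x, P (l • x) = l ^ N * P x) ∧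
  (∀ x, ∑ i : Fin d,
    iteratedFDeriv ℝ 2 P x ![EuclideanSpace.single i 1, EuclideanSpace.single i 1] = 0)

/-!
Blow up at a boundary point: for `Z` in a cone of directions pointing into the domain, the
expansion at `X_j` compares `P_j Z` with `r ^ (-N) • u (X_j + r • Z)`, and the expansion at `X₀`
compares the same vector with `P₀ (Z + r⁻¹ • (X_j - X₀))`. Taking `r` small, uniformly in `j` thanks
to the common modulus, and then `j` large shows that `P_j Z` tends to `P₀ Z`. The cone is open, so
a polynomial is determined by its values on it; on the finite-dimensional space of homogeneous
polynomials of degree `N`, pointwise convergence there is therefore convergence in the only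
Hausdorff vector space topology, and every linear map into a topological vector space, such as
differentiation into `C(V, ·)` with the compact-open topology, preserves it.
-/

section PosHomogeneous

variable {V F : Type*} [NormedAddCommGroup V] [NormedSpace ℝ V] [NormedAddCommGroup F]
  [NormedSpace ℝ F]

/-- Homogeneity of degree `N` with respect to positive dilations. -/
def IsPosHomogeneous (N : ℕ) (P : V → F) : Prop :=
  ∀ r : ℝ, 0 < r → ∀ v, P (r • v) = r ^ N • P v

variable (V F) in
/-- The space of continuous homogeneous polynomial maps of degree `N`, encoded as the restrictions
of continuous `N`-linear maps to the diagonal. -/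
def homogeneousPolynomials (N : ℕ) : Submodule ℝ (V → F) :=
  LinearMap.range (LinearMap.pi fun v : V =>
    (ContinuousMultilinearMap.apply ℝ (fun _ : Fin N => V) F fun _ => v).toLinearMap)

lemma mem_homogeneousPolynomials {N : ℕ} {P : V → F} :
    P ∈ homogeneousPolynomials V F N ↔ ∃ m : V [×N]→L[ℝ] F, (fun v => m fun _ => v) = P :=
  Iff.rfl

instance [FiniteDimensional ℝ V] [FiniteDimensional ℝ F] (N : ℕ) :
    FiniteDimensional ℝ (homogeneousPolynomials V F N) := by
  have : FiniteDimensional ℝ (V [×N]→L[ℝ] F) :=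
    Module.Finite.of_injective
      (ContinuousMultilinearMap.toMultilinearMapLinear (R' := ℝ) (A := ℝ))
      ContinuousMultilinearMap.toMultilinearMap_injective
  unfold homogeneousPolynomials
  infer_instance

lemma analyticOnNhd_of_mem_homogeneousPolynomials {N : ℕ} {P : V → F}
    (hP : P ∈ homogeneousPolynomials V F N) : AnalyticOnNhd ℝ P univ := by
  obtain ⟨m, rfl⟩ := mem_homogeneousPolynomials.1 hP
  exact fun v _ => m.analyticAt.comp
    ((ContinuousLinearMap.pi fun _ : Fin N => ContinuousLinearMap.id ℝ V).analyticAt v)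

lemma isPosHomogeneous_of_mem_homogeneousPolynomials {N : ℕ} {P : V → F}
    (hP : P ∈ homogeneousPolynomials V F N) : IsPosHomogeneous N P := by
  obtain ⟨m, rfl⟩ := mem_homogeneousPolynomials.1 hP
  intro r _ v
  simpa using m.map_smul_univ (fun _ => r) fun _ => v

lemma iteratedDeriv_comp_smul_right {N : ℕ} {P : V → F} (hP : ContDiff ℝ N P) (v : V) (r : ℝ) :
    iteratedDeriv N (fun s : ℝ => P (s • v)) r = iteratedFDeriv ℝ N P (r • v) fun _ => v := by
  have hline := (ContinuousLinearMap.toSpanSingleton ℝ v).iteratedFDeriv_comp_right hP r le_rfl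
  simpa [iteratedDeriv_eq_iteratedFDeriv, Function.comp_def] using
    congrArg (fun m => m fun _ => (1 : ℝ)) hline

lemma iteratedDeriv_pow_smul_const (N : ℕ) (w : F) (r : ℝ) :
    iteratedDeriv N (fun s : ℝ => s ^ N • w) r = (N.factorial : ℝ) • w := by
  have hline := (ContinuousLinearMap.toSpanSingleton ℝ w).iteratedFDeriv_comp_left
    (contDiff_fun_id.pow N).contDiffAt (x := r) (i := N) (n := N) le_rfl
  have hpow : iteratedDeriv N (fun s : ℝ => s ^ N) r = N.factorial := by
    simp [Nat.descFactorial_self]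
  rw [iteratedDeriv_eq_iteratedFDeriv] at hpow ⊢
  simpa [hpow, Function.comp_def] using congrArg (fun m => m fun _ => (1 : ℝ)) hline

/-- Along each ray `P (s • v) = s ^ N • P v`, so the `N`-th radial derivative is constantly
`N! • P v`; continuity then identifies it with the `N`-th derivative of `P` at the origin. -/
lemma IsPosHomogeneous.iteratedFDeriv_zero_apply {N : ℕ} {P : V → F} (hom : IsPosHomogeneous N P)
    (hP : ContDiff ℝ N P) (v : V) :
    iteratedFDeriv ℝ N P 0 (fun _ => v) = (N.factorial : ℝ) • P v := by
  have hray : ∀ r ∈ Ioi (0 : ℝ),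
      iteratedFDeriv ℝ N P (r • v) (fun _ => v) = (N.factorial : ℝ) • P v := by
    intro r hr
    have hpow : (fun s : ℝ => P (s • v)) =ᶠ[nhds r] fun s => s ^ N • P v :=
      (eventually_gt_nhds hr).mono fun s hs => hom s hs v
    rw [← iteratedDeriv_comp_smul_right hP, hpow.iteratedDeriv_eq, iteratedDeriv_pow_smul_const]
  have hcont : Continuous fun r : ℝ => iteratedFDeriv ℝ N P (r • v) fun _ => v := by
    have := hP.continuous_iteratedFDeriv le_rfl
    fun_prop
  have hlim := (hcont.tendsto 0).mono_left (nhdsWithin_le_nhds (s := Ioi 0))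
  rw [zero_smul] at hlim
  exact tendsto_nhds_unique hlim
    (tendsto_const_nhds.congr' (eventually_nhdsWithin_of_forall fun r hr => (hray r hr).symm))

lemma IsPosHomogeneous.mem_homogeneousPolynomials {N : ℕ} {P : V → F} (hom : IsPosHomogeneous N P)
    (hP : ContDiff ℝ N P) : P ∈ homogeneousPolynomials V F N := by
  refine _root_.mem_homogeneousPolynomials.2
    ⟨(N.factorial : ℝ)⁻¹ • iteratedFDeriv ℝ N P 0, funext fun v => ?_⟩
  change (N.factorial : ℝ)⁻¹ • iteratedFDeriv ℝ N P 0 (fun _ => v) = P v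
  rw [hom.iteratedFDeriv_zero_apply hP, inv_smul_smul₀ (mod_cast N.factorial_ne_zero)]

end PosHomogeneous

section FiniteDimensional

variable {𝕜 ι : Type*} [NontriviallyNormedField 𝕜] {l : Filter ι}

lemma tendsto_linearMap_of_tendsto_on_determining [CompleteSpace 𝕜] {X F G : Type*}
    [AddCommGroup F] [Module 𝕜 F] [TopologicalSpace F] [IsTopologicalAddGroup F]
    [ContinuousSMul 𝕜 F] [T2Space F]
    [AddCommGroup G] [Module 𝕜 G] [TopologicalSpace G] [IsTopologicalAddGroup G]
    [ContinuousSMul 𝕜 G]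
    {W : Submodule 𝕜 (X → F)} [FiniteDimensional 𝕜 W] (T : W →ₗ[𝕜] G) {S : Set X}
    (hS : ∀ f ∈ W, EqOn f 0 S → f = 0) {f : ι → W} {f₀ : W}
    (h : ∀ x ∈ S, Tendsto (fun j => (f j : X → F) x) l (nhds ((f₀ : X → F) x))) :
    Tendsto (fun j => T (f j)) l (nhds (T f₀)) := by
  let restrict : W →ₗ[𝕜] (S → F) := (LinearMap.funLeft 𝕜 F Subtype.val).comp W.subtype
  have hker : LinearMap.ker restrict = ⊥ :=
    LinearMap.ker_eq_bot'.2 fun g hg =>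
      Subtype.ext (hS g g.2 fun x hx => congrFun hg ⟨x, hx⟩)
  have hf : Tendsto f l (nhds f₀) :=
    (LinearMap.isClosedEmbedding_of_injective hker).isInducing.tendsto_nhds_iff.2
      (tendsto_pi_nhds.2 fun x => h x x.2)
  exact (T.continuous_of_finiteDimensional.tendsto f₀).comp hf

variable {V F : Type*} [NormedAddCommGroup V] [NormedSpace 𝕜 V] [NormedAddCommGroup F]
  [NormedSpace 𝕜 F]

theorem tendstoUniformlyOn_iteratedFDeriv_of_tendsto_on_isOpen [CompleteSpace 𝕜]
    [PreconnectedSpace V] {W : Submodule 𝕜 (V → F)} [FiniteDimensional 𝕜 W]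
    (hW : ∀ f ∈ W, AnalyticOnNhd 𝕜 f univ) {f : ι → V → F} {f₀ : V → F}
    (hf : ∀ j, f j ∈ W) (hf₀ : f₀ ∈ W) {S : Set V} (hSo : IsOpen S) (hSne : S.Nonempty)
    (h : ∀ x ∈ S, Tendsto (fun j => f j x) l (nhds (f₀ x))) (k : ℕ) {K : Set V}
    (hK : IsCompact K) :
    TendstoUniformlyOn (fun j => iteratedFDeriv 𝕜 k (f j)) (iteratedFDeriv 𝕜 k f₀) l K := by
  have hsmooth (f : W) : ContDiff 𝕜 k (f : V → F) := (hW f f.2).contDiff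
  have hS : ∀ f ∈ W, EqOn f 0 S → f = 0 := fun f hfW hfS =>
    have ⟨x, hx⟩ := hSne
    (hW f hfW).eq_of_eventuallyEq analyticOnNhd_const (hfS.eventuallyEq_of_mem (hSo.mem_nhds hx))
  let D : W →ₗ[𝕜] C(V, V [×k]→L[𝕜] F) :=
    { toFun := fun f => ⟨iteratedFDeriv 𝕜 k f, (hsmooth f).continuous_iteratedFDeriv le_rfl⟩
      map_add' := fun f g => ContinuousMap.ext fun _ =>
        iteratedFDeriv_add_apply (hsmooth f).contDiffAt (hsmooth g).contDiffAt
      map_smul' := fun _ f => ContinuousMap.ext fun _ =>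
        iteratedFDeriv_const_smul_apply (hsmooth f).contDiffAt }
  exact ContinuousMap.tendsto_iff_forall_isCompact_tendstoUniformlyOn.1
    (tendsto_linearMap_of_tendsto_on_determining D hS (f := fun j => ⟨f j, hf j⟩)
      (f₀ := ⟨f₀, hf₀⟩) h) K hK

lemma tendstoUniformlyOn_of_iteratedFDeriv_zero {f : ι → V → F} {f₀ : V → F} {K : Set V}
    (h : TendstoUniformlyOn (fun j => iteratedFDeriv 𝕜 0 (f j)) (iteratedFDeriv 𝕜 0 f₀) l K) :
    TendstoUniformlyOn f f₀ l K :=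
  (continuousMultilinearCurryFin0 𝕜 V F).isometry.uniformContinuous.comp_tendstoUniformlyOn h

end FiniteDimensional

section Dilation

variable {V : Type*} [NormedAddCommGroup V] {Z : V}

lemma tendsto_mul_norm_nhdsGT_zero (hZ : Z ≠ 0) :
    Tendsto (fun p : ℝ × V => p.1 * ‖p.2‖) (nhdsWithin 0 (Ioi 0) ×ˢ nhds Z)
      (nhdsWithin 0 (Ioi 0)) := by
  have hnorm : Tendsto (fun p : ℝ × V => ‖p.2‖) (nhdsWithin 0 (Ioi 0) ×ˢ nhds Z) (nhds ‖Z‖) :=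
    tendsto_snd.norm
  refine tendsto_nhdsWithin_iff.2 ⟨?_, ?_⟩
  · simpa using (tendsto_fst.mono_right nhdsWithin_le_nhds).mul hnorm
  · filter_upwards [tendsto_fst.eventually self_mem_nhdsWithin,
      hnorm.eventually_const_lt (norm_pos_iff.2 hZ)] with p hr hpos using mul_pos hr hpos

lemma tendsto_dilated_modulus_zero {ε : ℝ → ℝ} (hε : Tendsto ε (nhdsWithin 0 (Ioi 0)) (nhds 0))
    (hZ : Z ≠ 0) (C : ℝ) (N : ℕ) :
    Tendsto (fun p : ℝ × V => C * ‖p.2‖ ^ N * ε (p.1 * ‖p.2‖))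
      (nhdsWithin 0 (Ioi 0) ×ˢ nhds Z) (nhds 0) := by
  have hfactor : Tendsto (fun p : ℝ × V => C * ‖p.2‖ ^ N) (nhdsWithin 0 (Ioi 0) ×ˢ nhds Z)
      (nhds (C * ‖Z‖ ^ N)) := (tendsto_snd.norm.pow N).const_mul C
  simpa using hfactor.mul (hε.comp (tendsto_mul_norm_nhdsGT_zero hZ))

end Dilation

section LeadingTerm

variable {V F : Type*} [NormedAddCommGroup V] [NormedSpace ℝ V] [NormedAddCommGroup F]
  [NormedSpace ℝ F] {u : V → F} {D : Set V} {R C : ℝ} {ε : ℝ → ℝ} {N : ℕ}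

/-- In `D`, up to distance `R` from `Y`, the function `u` agrees with its leading term `P (· - Y)`
of degree `N` up to an error `C s ^ N ε(s)` at distance `s` from `Y`. -/
def HasLeadingTermAt (u : V → F) (D : Set V) (R C : ℝ) (ε : ℝ → ℝ) (N : ℕ) (P : V → F)
    (Y : V) : Prop :=
  ∀ X ∈ ball Y R ∩ D, ‖u X - P (X - Y)‖ ≤ C * ‖X - Y‖ ^ N * ε ‖X - Y‖

lemma HasLeadingTermAt.norm_blowup_sub_le {P : V → F} {Y : V}
    (h : HasLeadingTermAt u D R C ε N P Y) (hom : IsPosHomogeneous N P) {r : ℝ} (hr : 0 < r)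
    {Z : V} (hZR : r * ‖Z‖ < R) (hZD : Y + r • Z ∈ D) :
    ‖(r ^ N)⁻¹ • u (Y + r • Z) - P Z‖ ≤ C * ‖Z‖ ^ N * ε (r * ‖Z‖) := by
  have hrN : 0 < r ^ N := pow_pos hr N
  have hnorm : ‖r • Z‖ = r * ‖Z‖ := norm_smul_of_nonneg hr.le Z
  have hX := h (Y + r • Z) ⟨by rwa [mem_ball_iff_norm, add_sub_cancel_left, hnorm], hZD⟩
  rw [add_sub_cancel_left, hnorm, hom r hr] at hX
  calc ‖(r ^ N)⁻¹ • u (Y + r • Z) - P Z‖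
      = (r ^ N)⁻¹ * ‖u (Y + r • Z) - r ^ N • P Z‖ := by
        rw [← norm_smul_of_nonneg (inv_nonneg.2 hrN.le), smul_sub, inv_smul_smul₀ hrN.ne']
    _ ≤ (r ^ N)⁻¹ * (C * (r * ‖Z‖) ^ N * ε (r * ‖Z‖)) := by gcongr
    _ = C * ‖Z‖ ^ N * ε (r * ‖Z‖) := by rw [mul_pow]; field_simp

lemma HasLeadingTermAt.dist_le {P Q : V → F} {Y Y' Z Z' : V} {r : ℝ}
    (hP : HasLeadingTermAt u D R C ε N P Y) (hQ : HasLeadingTermAt u D R C ε N Q Y')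
    (homP : IsPosHomogeneous N P) (homQ : IsPosHomogeneous N Q) (hr : 0 < r)
    (hZ : r * ‖Z‖ < R) (hZ' : r * ‖Z'‖ < R) (hD : Y + r • Z ∈ D)
    (hYZ : Y + r • Z = Y' + r • Z') :
    dist (P Z) (Q Z') ≤ C * ‖Z‖ ^ N * ε (r * ‖Z‖) + C * ‖Z'‖ ^ N * ε (r * ‖Z'‖) := by
  have hPZ := hP.norm_blowup_sub_le homP hr hZ hD
  have hQZ' := hQ.norm_blowup_sub_le homQ hr hZ' (hYZ ▸ hD)
  rw [← dist_eq_norm] at hPZ hQZ'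
  rw [← hYZ] at hQZ'
  exact (dist_triangle_left _ _ _).trans (add_le_add hPZ hQZ')

theorem tendsto_of_hasLeadingTermAt {ι : Type*} {l : Filter ι} {P : ι → V → F} {P₀ : V → F}
    {X : ι → V} {X₀ Z : V} (hR : 0 < R) (hε : Tendsto ε (nhdsWithin 0 (Ioi 0)) (nhds 0))
    (hX : Tendsto X l (nhds X₀)) (hZ : Z ≠ 0)
    (hZD : ∀ᶠ r in nhdsWithin (0 : ℝ) (Ioi 0), ∀ᶠ j in l, X j + r • Z ∈ D)
    (hom : ∀ j, IsPosHomogeneous N (P j)) (hom₀ : IsPosHomogeneous N P₀)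
    (hcont₀ : ContinuousAt P₀ Z) (hP : ∀ j, HasLeadingTermAt u D R C ε N (P j) (X j))
    (hP₀ : HasLeadingTermAt u D R C ε N P₀ X₀) :
    Tendsto (fun j => P j Z) l (nhds (P₀ Z)) := by
  refine Metric.tendsto_nhds.2 fun η hη => ?_
  have hη3 : 0 < η / 3 := by positivity
  have hsmall : ∀ᶠ p : ℝ × V in nhdsWithin 0 (Ioi 0) ×ˢ nhds Z,
      p.1 * ‖p.2‖ < R ∧ C * ‖p.2‖ ^ N * ε (p.1 * ‖p.2‖) < η / 3 :=
    ((tendsto_nhds_of_tendsto_nhdsWithin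
      (tendsto_mul_norm_nhdsGT_zero hZ)).eventually_lt_const hR).and
      ((tendsto_dilated_modulus_zero hε hZ C N).eventually_lt_const hη3)
  obtain ⟨r, hnear, hr, hrD⟩ := (hsmall.curry.and (eventually_mem_nhdsWithin.and hZD)).exists
  obtain ⟨hZR, hZerr⟩ := hnear.self_of_nhds
  -- `X₀ + r • W j` and `X j + r • Z` are the same point of `D`, and `W j` tends to `Z`.
  let W : ι → V := fun j => Z + r⁻¹ • (X j - X₀)
  have hW : Tendsto W l (nhds Z) := by
    simpa using ((hX.sub_const X₀).const_smul r⁻¹).const_add Z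
  filter_upwards [hrD, hW.eventually hnear,
    Metric.tendsto_nhds.1 (hcont₀.tendsto.comp hW) _ hη3] with j hjD ⟨hWR, hWerr⟩ hP₀W
  have hsame : X j + r • Z = X₀ + r • W j := by
    rw [smul_add, smul_inv_smul₀ (ne_of_gt hr)]
    abel
  calc dist (P j Z) (P₀ Z)
      ≤ dist (P j Z) (P₀ (W j)) + dist (P₀ (W j)) (P₀ Z) := dist_triangle _ _ _
    _ < (η / 3 + η / 3) + η / 3 := by
        have hblowup := (hP j).dist_le hP₀ (hom j) hom₀ hr hZR hWR hjD hsame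
        exact add_lt_add (hblowup.trans_lt (add_lt_add hZerr hWerr)) hP₀W
    _ = η := by ring

theorem leading_polynomials_converge_general [FiniteDimensional ℝ V] [FiniteDimensional ℝ F]
    {ι : Type*} {l : Filter ι} {P : ι → V → F} {P₀ : V → F} {X : ι → V} {X₀ : V} {S : Set V}
    (hSo : IsOpen S) (hSne : S.Nonempty) (hS0 : 0 ∉ S)
    (hSD : ∀ Z ∈ S, ∀ᶠ r in nhdsWithin (0 : ℝ) (Ioi 0), ∀ᶠ j in l, X j + r • Z ∈ D)
    (hR : 0 < R) (hε : Tendsto ε (nhdsWithin 0 (Ioi 0)) (nhds 0)) (hX : Tendsto X l (nhds X₀))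
    (hPmem : ∀ j, P j ∈ homogeneousPolynomials V F N)
    (hP₀mem : P₀ ∈ homogeneousPolynomials V F N)
    (hP : ∀ j, HasLeadingTermAt u D R C ε N (P j) (X j))
    (hP₀ : HasLeadingTermAt u D R C ε N P₀ X₀) :
    TendstoUniformlyOn P P₀ l (ball 0 1) ∧
    ∀ (k : ℕ) (K : Set V), IsCompact K →
      TendstoUniformlyOn (fun j => iteratedFDeriv ℝ k (P j)) (iteratedFDeriv ℝ k P₀) l K := by
  have hanalytic : ∀ Q ∈ homogeneousPolynomials V F N, AnalyticOnNhd ℝ Q univ :=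
    fun _ => analyticOnNhd_of_mem_homogeneousPolynomials
  have hpointwise : ∀ Z ∈ S, Tendsto (fun j => P j Z) l (nhds (P₀ Z)) := fun Z hZ =>
    tendsto_of_hasLeadingTermAt hR hε hX (ne_of_mem_of_not_mem hZ hS0) (hSD Z hZ)
      (fun j => isPosHomogeneous_of_mem_homogeneousPolynomials (hPmem j))
      (isPosHomogeneous_of_mem_homogeneousPolynomials hP₀mem)
      (hanalytic P₀ hP₀mem Z (mem_univ Z)).continuousAt hP hP₀
  have hderiv (k : ℕ) (K : Set V) (hK : IsCompact K) :=
    tendstoUniformlyOn_iteratedFDeriv_of_tendsto_on_isOpen hanalytic hPmem hP₀mem hSo hSne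
      hpointwise k hK
  exact ⟨(tendstoUniformlyOn_of_iteratedFDeriv_zero
    (hderiv 0 _ (isCompact_closedBall 0 1))).mono ball_subset_closedBall, hderiv⟩

end LeadingTerm

section Graph

variable {n : ℕ}

lemma initC_graphPt_add_smul (x : Eb n) (t r : ℝ) (Z : E n) :
    initC (graphPt x t + r • Z) = x + r • initC Z := by
  ext i
  simp [initC, graphPt]

lemma lastC_graphPt_add_smul (x : Eb n) (t r : ℝ) (Z : E n) :
    lastC (graphPt x t + r • Z) = t + r * lastC Z := by
  simp [lastC, graphPt]

/-- The open cone of directions steeper than `κ`. -/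
def steepCone (n : ℕ) (κ : ℝ) : Set (E n) := {Z | κ * ‖initC Z‖ < lastC Z}

lemma isOpen_steepCone (κ : ℝ) : IsOpen (steepCone n κ) := by
  have hinit : Continuous (initC : E n → Eb n) := by
    unfold initC
    fun_prop
  have hlast : Continuous (lastC : E n → ℝ) := by
    unfold lastC
    fun_prop
  exact isOpen_lt (continuous_const.mul hinit.norm) hlast

lemma steepCone_nonempty (κ : ℝ) : (steepCone n κ).Nonempty :=
  ⟨EuclideanSpace.single (Fin.last n) 1, by simp [steepCone, initC, lastC, ← Pi.zero_def]⟩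

lemma zero_notMem_steepCone (κ : ℝ) : (0 : E n) ∉ steepCone n κ := by
  simp [steepCone, initC, lastC, ← Pi.zero_def]

lemma graphPt_add_smul_mem_Dom {κ : NNReal} {φ : Eb n → ℝ} (hφ : LipschitzWith κ φ) (x : Eb n)
    {Z : E n} (hZ : Z ∈ steepCone n κ) {r : ℝ} (hr : 0 < r) :
    graphPt x (φ x) + r • Z ∈ Dom φ := by
  simp only [Dom, mem_ofPred_eq, initC_graphPt_add_smul, lastC_graphPt_add_smul]
  calc φ (x + r • initC Z) ≤ φ x + κ * dist (x + r • initC Z) x := hφ.le_add_mul _ _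
    _ = φ x + r * (κ * ‖initC Z‖) := by
        rw [dist_self_add_left, norm_smul_of_nonneg hr.le, mul_left_comm]
    _ < φ x + r * lastC Z := by gcongr; exact hZ

end Graph

lemma IsHomHarmPoly.mem_homogeneousPolynomials {d N : ℕ} {P : EuclideanSpace ℝ (Fin d) → ℝ}
    (hP : IsHomHarmPoly N P) : P ∈ homogeneousPolynomials (EuclideanSpace ℝ (Fin d)) ℝ N := by
  obtain ⟨⟨p, hp⟩, hom, -⟩ := hP
  have hsmooth : ContDiff ℝ N P := by
    simp only [funext hp, MvPolynomial.eval_eq']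
    fun_prop
  exact IsPosHomogeneous.mem_homogeneousPolynomials hom hsmooth

/-- continuity of the leading polynomials in the expansion. If `u` admits
expansions with homogeneous harmonic polynomials `P_j` of the same degree `N` at boundary
points `X_j → X₀`, with uniform constants and a common error modulus `ε(r) → 0`, then
`P_j → P₀` uniformly on the unit ball, and hence together with all derivatives uniformly
on every compact set (`C^k`-convergence for every `k`). -/
theorem leading_polynomials_converge
    {n : ℕ} (hn : 1 ≤ n)
    (θ : ℝ → ℝ) (hθmono : MonotoneOn θ (Set.Ici (0:ℝ)))
    (hθnn : ∀ r : ℝ, 0 ≤ r → 0 ≤ θ r)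
    (hθ0 : Tendsto θ (nhdsWithin 0 (Set.Ioi 0)) (nhds 0))
    (φ : Eb n → ℝ) (hφ : ContDiff ℝ 1 φ)
    (hφbd : ∀ x : Eb n, ‖fderiv ℝ φ x‖ ≤ 1)
    (hφmod : ∀ x y : Eb n, ‖fderiv ℝ φ x - fderiv ℝ φ y‖ ≤ θ ‖x - y‖)
    (u : E n → ℝ)
    (N : ℕ) (hN : 1 ≤ N)
    (ε : ℝ → ℝ) (hεnn : ∀ r : ℝ, 0 < r → 0 ≤ ε r)
    (hε0 : Tendsto ε (nhdsWithin 0 (Set.Ioi 0)) (nhds 0))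
    (x : ℕ → Eb n) (x₀ : Eb n)
    (hconv : Tendsto (fun j => graphPt (x j) (φ (x j))) atTop
      (nhds (graphPt x₀ (φ x₀))))
    (R C : ℝ) (hR : 0 < R) (hC : 0 < C)
    (P : ℕ → E n → ℝ) (P₀ : E n → ℝ)
    (hPj : ∀ j, IsHomHarmPoly N (P j))
    (hP₀ : IsHomHarmPoly N P₀)
    (hexpj : ∀ j, ∀ X ∈ ball (graphPt (x j) (φ (x j))) R ∩ Dom φ,
      |u X - P j (X - graphPt (x j) (φ (x j)))| ≤
        C * ‖X - graphPt (x j) (φ (x j))‖ ^ N * ε ‖X - graphPt (x j) (φ (x j))‖)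
    (hexp₀ : ∀ X ∈ ball (graphPt x₀ (φ x₀)) R ∩ Dom φ,
      |u X - P₀ (X - graphPt x₀ (φ x₀))| ≤
        C * ‖X - graphPt x₀ (φ x₀)‖ ^ N * ε ‖X - graphPt x₀ (φ x₀)‖) :
    TendstoUniformlyOn (fun j => P j) P₀ atTop (ball (0 : E n) 1) ∧
    ∀ (k : ℕ) (K : Set (E n)), IsCompact K →
      TendstoUniformlyOn (fun j Y => iteratedFDeriv ℝ k (P j) Y)
        (fun Y => iteratedFDeriv ℝ k P₀ Y) atTop K := by
  have hLip : LipschitzWith 1 φ :=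
    lipschitzWith_of_nnnorm_fderiv_le (hφ.differentiable one_ne_zero) hφbd
  exact leading_polynomials_converge_general (isOpen_steepCone 1) (steepCone_nonempty 1)
    (zero_notMem_steepCone 1) (fun Z hZ => eventually_mem_nhdsWithin.mono fun r hr =>
      .of_forall fun j => graphPt_add_smul_mem_Dom hLip (x j) hZ hr)
    hR hε0 hconv (fun j => (hPj j).mem_homogeneousPolynomials) hP₀.mem_homogeneousPolynomials
    hexpj hexp₀
end
end

section
/- Let d ≥ 2, let φ : ℝ^{d−1} → ℝ be C¹, let Φ(y,s) := (y, s + φ(y)), let U ⊆ ℝ^d be open, and let u be harmonic on U (u is C² with Δu = 0). Set W := Φ^{−1}(U) = {(y,s) : (y, s+φ(y)) ∈ U} and v := u ∘ Φ on W. Then v is C¹ on W and v is a weak solution of −div(A(y)∇v) = 0 on W, i.e. for every smooth compactly supported ζ : W → ℝ one has ∫_W ⟨A(y) ∇v(y,s), ∇ζ(y,s)⟩ dy ds = 0, where A(y) := [[Id_{d−1}, −∇φ(y)], [−∇φ(y)ᵀ, 1 + |∇φ(y)|²]]. -/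
open Matrix Set MeasureTheory

noncomputable section

/-- The graph-flattening map `Φ(y,s) = (y, s + φ(y))`. -/
def flatMap {n : ℕ} (φ : Eb n → ℝ) (X : E n) : E n :=
  X + (φ (initC X)) • EuclideanSpace.single (Fin.last n) (1 : ℝ)

/-- the gradient of `φ : ℝ^n → ℝ` at `y`, as a vector of `ℝ^n` -/
def gradVec {n : ℕ} (φ : Eb n → ℝ) (y : Eb n) : Fin n → ℝ :=
  fun i => fderiv ℝ φ y (EuclideanSpace.single i 1)

/-- the gradient of a scalar function on `ℝ^{n+1}`, as a vector -/
def gradVec' {n : ℕ} (v : E n → ℝ) (X : E n) : Fin (n + 1) → ℝ :=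
  fun i => fderiv ℝ v X (EuclideanSpace.single i 1)

/-- The coefficient matrix `A(y) = [[Id_{n}, −∇φ(y)], [−∇φ(y)ᵀ, 1 + |∇φ(y)|²]]`. -/
def coefMat {n : ℕ} (g : Fin n → ℝ) : Matrix (Fin (n + 1)) (Fin (n + 1)) ℝ :=
  Matrix.of fun i j =>
    if hi : (i : ℕ) < n then
      if hj : (j : ℕ) < n then (if i = j then 1 else 0) else -(g ⟨i, hi⟩)
    else
      if hj : (j : ℕ) < n then -(g ⟨j, hj⟩) else 1 + ∑ k, (g k) ^ 2

/-- `u` is harmonic on `U`: `u` is `C²` on `U` and `Δu = 0` there. -/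
def IsHarmonicOn {d : ℕ} (u : EuclideanSpace ℝ (Fin d) → ℝ)
    (U : Set (EuclideanSpace ℝ (Fin d))) : Prop :=
  ContDiffOn ℝ 2 u U ∧
  ∀ x ∈ U, ∑ i : Fin d,
    iteratedFDeriv ℝ 2 u x ![EuclideanSpace.single i 1, EuclideanSpace.single i 1] = 0

/-! Let `J` be the Jacobian of `Φ`. The chain rule reads `∇(w ∘ Φ) = Jᵀ (∇w ∘ Φ)`, and the
coefficient matrix is `A = J⁻¹ J⁻ᵀ`, so `⟨A ∇(u ∘ Φ), ∇(ψ ∘ Φ)⟩ = ⟨∇u, ∇ψ⟩ ∘ Φ` pointwise. Since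
`Φ` preserves volume, the weak equation for `u ∘ Φ` tested against `ζ` is the weak Laplace equation
for `u` tested against `ψ = ζ ∘ Φ⁻¹`. That `ψ` is only `C¹`, like `φ`, but this is enough to
integrate by parts. -/

open scoped Laplacian

lemma integrable_mul_of_tsupport_subset {X : Type*} [TopologicalSpace X] [T2Space X]
    [MeasurableSpace X] [OpensMeasurableSpace X] {μ : Measure X} [IsFiniteMeasureOnCompacts μ]
    {U : Set X} {f ψ : X → ℝ} (hf : ContinuousOn f U) (hψ : ContinuousOn ψ U)
    (hc : HasCompactSupport ψ) (hs : tsupport ψ ⊆ U) : Integrable (fun x => f x * ψ x) μ := by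
  have hint : IntegrableOn (fun x => f x * ψ x) (tsupport ψ) μ :=
    ((hf.mul hψ).mono hs).integrableOn_compact hc
  refine (integrableOn_iff_integrable_of_support_subset ?_).mp hint
  exact (Function.support_mul_subset_right f ψ).trans (subset_tsupport ψ)

lemma laplacian_eq_sum_fderiv_fderiv {F ι : Type*} [NormedAddCommGroup F]
    [InnerProductSpace ℝ F] [FiniteDimensional ℝ F] [Fintype ι] {u : F → ℝ}
    (b : OrthonormalBasis ι ℝ F) {x : F} (hu : DifferentiableAt ℝ (fderiv ℝ u) x) :
    Δ u x = ∑ i, fderiv ℝ (fun y => fderiv ℝ u y (b i)) x (b i) := by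
  rw [InnerProductSpace.laplacian_eq_iteratedFDeriv_orthonormalBasis u b]
  refine Finset.sum_congr rfl fun i _ => ?_
  rw [iteratedFDeriv_two_apply, fderiv_clm_apply hu (differentiableAt_const _)]
  simp

section GreenIdentity

variable {F : Type*} [NormedAddCommGroup F] [MeasurableSpace F] [BorelSpace F] {μ : Measure F}
  {U : Set F} {ψ : F → ℝ}

lemma setIntegral_mul_fderiv_eq_neg [NormedSpace ℝ F] [FiniteDimensional ℝ F]
    [μ.IsAddHaarMeasure] {f : F → ℝ} (hU : IsOpen U) (hf : ContDiffOn ℝ 1 f U) (hψ : ContDiff ℝ 1 ψ)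
    (hc : HasCompactSupport ψ) (hs : tsupport ψ ⊆ U) (v : F) :
    ∫ x in U, f x * fderiv ℝ ψ x v ∂μ = -∫ x in U, fderiv ℝ f x v * ψ x ∂μ := by
  have hψ_zero : ∀ x ∉ U, ψ x = 0 := fun x hx => image_eq_zero_of_notMem_tsupport (mt (@hs x) hx)
  have hdψ_zero : ∀ x ∉ U, fderiv ℝ ψ x v = 0 := fun x hx => by
    simp [fderiv_of_notMem_tsupport ℝ (mt (@hs x) hx)]
  have hdf : ContinuousOn (fun x => fderiv ℝ f x v) U :=
    (hf.continuousOn_fderiv_of_isOpen hU le_rfl).clm_apply continuousOn_const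
  have hdψ : Continuous fun x => fderiv ℝ ψ x v :=
    (hψ.continuous_fderiv one_ne_zero).clm_apply continuous_const
  rw [setIntegral_eq_integral_of_forall_compl_eq_zero fun x hx => by rw [hdψ_zero x hx, mul_zero],
    setIntegral_eq_integral_of_forall_compl_eq_zero fun x hx => by rw [hψ_zero x hx, mul_zero]]
  exact integral_mul_fderiv_eq_neg_fderiv_mul_of_integrable
    (integrable_mul_of_tsupport_subset hdf hψ.continuous.continuousOn hc hs)
    (integrable_mul_of_tsupport_subset hf.continuousOn hdψ.continuousOn (hc.fderiv_apply ℝ v)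
      ((tsupport_fderiv_apply_subset ℝ v).trans hs))
    (integrable_mul_of_tsupport_subset hf.continuousOn hψ.continuous.continuousOn hc hs)
    (fun x hx => (hf.differentiableOn one_ne_zero).differentiableAt (hU.mem_nhds (hs hx)))
    (fun x _ => hψ.differentiable one_ne_zero x)

theorem setIntegral_sum_fderiv_mul_fderiv_eq_neg_laplacian [InnerProductSpace ℝ F]
    [FiniteDimensional ℝ F] [μ.IsAddHaarMeasure] {ι : Type*} [Fintype ι] {u : F → ℝ}
    (b : OrthonormalBasis ι ℝ F) (hU : IsOpen U) (hu : ContDiffOn ℝ 2 u U)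
    (hψ : ContDiff ℝ 1 ψ) (hc : HasCompactSupport ψ) (hs : tsupport ψ ⊆ U) :
    ∫ x in U, ∑ i, fderiv ℝ u x (b i) * fderiv ℝ ψ x (b i) ∂μ = -∫ x in U, Δ u x * ψ x ∂μ := by
  have hdu : ContDiffOn ℝ 1 (fderiv ℝ u) U := hu.fderiv_of_isOpen hU (by norm_num)
  have hdu_apply (i : ι) : ContDiffOn ℝ 1 (fun x => fderiv ℝ u x (b i)) U :=
    hdu.clm_apply contDiffOn_const
  have hddu (i : ι) : ContinuousOn (fun x => fderiv ℝ (fun y => fderiv ℝ u y (b i)) x (b i)) U :=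
    ((hdu_apply i).continuousOn_fderiv_of_isOpen hU le_rfl).clm_apply continuousOn_const
  have hdψ (i : ι) : Continuous fun x => fderiv ℝ ψ x (b i) :=
    (hψ.continuous_fderiv one_ne_zero).clm_apply continuous_const
  calc ∫ x in U, ∑ i, fderiv ℝ u x (b i) * fderiv ℝ ψ x (b i) ∂μ
      = ∑ i, ∫ x in U, fderiv ℝ u x (b i) * fderiv ℝ ψ x (b i) ∂μ :=
        integral_finsetSum _ fun i _ => (integrable_mul_of_tsupport_subset
          (hdu_apply i).continuousOn (hdψ i).continuousOn (hc.fderiv_apply ℝ (b i))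
          ((tsupport_fderiv_apply_subset ℝ (b i)).trans hs)).integrableOn
    _ = -∑ i, ∫ x in U, fderiv ℝ (fun y => fderiv ℝ u y (b i)) x (b i) * ψ x ∂μ := by
        simp only [setIntegral_mul_fderiv_eq_neg hU (hdu_apply _) hψ hc hs, Finset.sum_neg_distrib]
    _ = -∫ x in U, ∑ i, fderiv ℝ (fun y => fderiv ℝ u y (b i)) x (b i) * ψ x ∂μ := by
        rw [integral_finsetSum _ fun i _ => (integrable_mul_of_tsupport_subset (hddu i)
          hψ.continuous.continuousOn hc hs).integrableOn]
    _ = -∫ x in U, Δ u x * ψ x ∂μ := by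
        congr 1
        refine setIntegral_congr_fun hU.measurableSet fun x hx => ?_
        have hdux := (hdu.differentiableOn one_ne_zero).differentiableAt (hU.mem_nhds hx)
        simp only [laplacian_eq_sum_fderiv_fderiv b hdux, Finset.sum_mul]

end GreenIdentity

namespace IsHarmonicOn

variable {d : ℕ} {u : EuclideanSpace ℝ (Fin d) → ℝ} {U : Set (EuclideanSpace ℝ (Fin d))}

lemma laplacian_eq_zero (hu : IsHarmonicOn u U) {x : EuclideanSpace ℝ (Fin d)} (hx : x ∈ U) :
    Δ u x = 0 := by
  simpa [InnerProductSpace.laplacian_eq_iteratedFDeriv_orthonormalBasis u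
    (EuclideanSpace.basisFun (Fin d) ℝ)] using hu.2 x hx

lemma differentiableAt (hu : IsHarmonicOn u U) (hU : IsOpen U) {x : EuclideanSpace ℝ (Fin d)}
    (hx : x ∈ U) : DifferentiableAt ℝ u x :=
  (hu.1.differentiableOn two_ne_zero).differentiableAt (hU.mem_nhds hx)

end IsHarmonicOn

theorem IsHarmonicOn.setIntegral_gradVec'_dotProduct_eq_zero {n : ℕ} {u ψ : E n → ℝ} {U : Set (E n)}
    (hu : IsHarmonicOn u U) (hU : IsOpen U) (hψ : ContDiff ℝ 1 ψ) (hc : HasCompactSupport ψ)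
    (hs : tsupport ψ ⊆ U) : ∫ x in U, gradVec' u x ⬝ᵥ gradVec' ψ x = 0 := by
  have hgreen := setIntegral_sum_fderiv_mul_fderiv_eq_neg_laplacian (μ := volume)
    (EuclideanSpace.basisFun (Fin (n + 1)) ℝ) hU hu.1 hψ hc hs
  simp only [EuclideanSpace.basisFun_apply] at hgreen
  have hlap : ∫ x in U, Δ u x * ψ x = 0 :=
    setIntegral_eq_zero_of_forall_eq_zero fun x hx => by rw [hu.laplacian_eq_zero hx, zero_mul]
  rwa [hlap, neg_zero] at hgreen

section FlatteningMap

variable {n : ℕ}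

lemma initC_add (X Y : E n) : initC (X + Y) = initC X + initC Y := rfl

lemma initC_smul (c : ℝ) (X : E n) : initC (c • X) = c • initC X := rfl

lemma initC_single_last (c : ℝ) : initC (EuclideanSpace.single (Fin.last n) c) = 0 := by
  ext i
  simp [initC]

lemma initC_single_castSucc (i : Fin n) (c : ℝ) :
    initC (EuclideanSpace.single i.castSucc c) = EuclideanSpace.single i c := by
  ext j
  simp [initC]

/-- The projection `(y, s) ↦ y` as a continuous linear map. -/
def initCLM (n : ℕ) : E n →L[ℝ] Eb n :=
  LinearMap.toContinuousLinearMap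
    { toFun := initC, map_add' := initC_add, map_smul' := initC_smul }

lemma initCLM_apply (X : E n) : initCLM n X = initC X := rfl

lemma flatMap_apply_last (φ : Eb n → ℝ) (X : E n) :
    flatMap φ X (Fin.last n) = X (Fin.last n) + φ (initC X) := by
  simp [flatMap]

lemma initC_flatMap (φ : Eb n → ℝ) (X : E n) : initC (flatMap φ X) = initC X := by
  rw [flatMap, initC_add, initC_smul, initC_single_last, smul_zero, add_zero]

lemma flatMap_zero (X : E n) : flatMap 0 X = X := by
  simp [flatMap]

lemma flatMap_flatMap (φ χ : Eb n → ℝ) (X : E n) :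
    flatMap φ (flatMap χ X) = flatMap (φ + χ) X := by
  rw [flatMap, initC_flatMap, flatMap, flatMap, Pi.add_apply]
  module

lemma continuous_flatMap {φ : Eb n → ℝ} (hφ : Continuous φ) : Continuous (flatMap φ) :=
  continuous_id.add ((hφ.comp (initCLM n).continuous).smul continuous_const)

lemma contDiff_flatMap {k : WithTop ℕ∞} {φ : Eb n → ℝ} (hφ : ContDiff ℝ k φ) :
    ContDiff ℝ k (flatMap φ) :=
  contDiff_id.add ((hφ.comp (initCLM n).contDiff).smul contDiff_const)

/-- The flattening map of a continuous `φ` as a homeomorphism, with inverse that of `-φ`. -/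
def flatHomeomorph (φ : Eb n → ℝ) (hφ : Continuous φ) : E n ≃ₜ E n where
  toFun := flatMap φ
  invFun := flatMap (-φ)
  left_inv X := by rw [flatMap_flatMap, neg_add_cancel, flatMap_zero]
  right_inv X := by rw [flatMap_flatMap, add_neg_cancel, flatMap_zero]
  continuous_toFun := continuous_flatMap hφ
  continuous_invFun := continuous_flatMap hφ.neg

/-- The identification `X ↦ (y, s)` of `ℝⁿ⁺¹` with `ℝⁿ × ℝ`. -/
def splitLast (n : ℕ) : E n ≃ᵐ (Fin n → ℝ) × ℝ :=
  (MeasurableEquiv.toLp 2 (Fin (n + 1) → ℝ)).symm.trans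
    ((MeasurableEquiv.piFinSuccAbove (fun _ => ℝ) (Fin.last n)).trans MeasurableEquiv.prodComm)

lemma splitLast_apply (X : E n) :
    splitLast n X = (WithLp.ofLp (initC X), X (Fin.last n)) := by
  ext <;> simp [splitLast, MeasurableEquiv.prodComm, initC, Fin.init]

lemma measurePreserving_splitLast : MeasurePreserving (splitLast n) :=
  Measure.measurePreserving_swap.comp
    ((volume_preserving_piFinSuccAbove (fun _ => ℝ) (Fin.last n)).comp
      (PiLp.volume_preserving_ofLp _))

theorem measurePreserving_flatMap {φ : Eb n → ℝ} (hφ : Measurable φ) :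
    MeasurePreserving (flatMap φ) := by
  have hskew : MeasurePreserving
      fun p : (Fin n → ℝ) × ℝ => (p.1, p.2 + φ (WithLp.toLp 2 p.1)) :=
    (MeasurePreserving.id volume).skew_product (g := fun y s => s + φ (WithLp.toLp 2 y))
      (by fun_prop) (ae_of_all _ fun y => map_add_right_eq_self volume _)
  convert! (measurePreserving_splitLast.symm _).comp (hskew.comp measurePreserving_splitLast)
    using 1
  funext X
  rw [Function.comp_apply, MeasurableEquiv.eq_symm_apply]
  simp [splitLast_apply, initC_flatMap, flatMap_apply_last]

/-- The Jacobian matrix `[[Id, 0], [gᵀ, 1]]` of the flattening map at a point where `∇φ = g`. -/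
def flatJacobian (g : Fin n → ℝ) : Matrix (Fin (n + 1)) (Fin (n + 1)) ℝ :=
  1 + vecMulVec (Pi.single (Fin.last n) 1) (Fin.snoc g 0)

lemma flatJacobian_apply_castSucc (g : Fin n → ℝ) (i : Fin n) :
    flatJacobian g i.castSucc = Pi.single i.castSucc 1 := by
  ext j
  simp [flatJacobian, one_apply, vecMulVec_apply, Pi.single_apply, eq_comm]

lemma flatJacobian_apply_last (g : Fin n → ℝ) :
    flatJacobian g (Fin.last n) = Fin.snoc g 1 := by
  ext j
  cases j using Fin.lastCases with
  | last => simp [flatJacobian, vecMulVec_apply]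
  | cast j => simp [flatJacobian, one_apply, vecMulVec_apply, (Fin.castSucc_ne_last j).symm]

lemma flatJacobian_mul_flatJacobian_neg (g : Fin n → ℝ) :
    flatJacobian g * flatJacobian (-g) = 1 := by
  have hsnoc : (Fin.snoc (-g) 0 : Fin (n + 1) → ℝ) = -Fin.snoc g 0 := by
    ext j
    cases j using Fin.lastCases <;> simp
  simp [flatJacobian, hsnoc, add_mul, mul_add, vecMulVec_mul_vecMulVec]

lemma coefMat_eq_flatJacobian_neg_mul_transpose (g : Fin n → ℝ) :
    coefMat g = flatJacobian (-g) * (flatJacobian (-g))ᵀ := by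
  ext i j
  change coefMat g i j = flatJacobian (-g) i ⬝ᵥ flatJacobian (-g) j
  cases i using Fin.lastCases with
  | last =>
    rw [flatJacobian_apply_last]
    cases j using Fin.lastCases with
    | last =>
      rw [flatJacobian_apply_last]
      simp [coefMat, dotProduct, Fin.sum_univ_castSucc, pow_two, add_comm]
    | cast j => simp [coefMat, flatJacobian_apply_castSucc]
  | cast i =>
    rw [flatJacobian_apply_castSucc, single_one_dotProduct]
    cases j using Fin.lastCases with
    | last => simp [coefMat, flatJacobian_apply_last]
    | cast j => simp [coefMat, flatJacobian_apply_castSucc, Pi.single_apply]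

lemma coefMat_mulVec_dotProduct (g : Fin n → ℝ) (a b : Fin (n + 1) → ℝ) :
    (coefMat g *ᵥ ((flatJacobian g)ᵀ *ᵥ a)) ⬝ᵥ ((flatJacobian g)ᵀ *ᵥ b) = a ⬝ᵥ b := by
  have hinv := flatJacobian_mul_flatJacobian_neg g
  have hcoef : flatJacobian g * coefMat g * (flatJacobian g)ᵀ = 1 := by
    rw [coefMat_eq_flatJacobian_neg_mul_transpose, ← Matrix.mul_assoc, hinv, Matrix.one_mul,
      ← transpose_mul, hinv, transpose_one]
  rw [mulVec_transpose _ b, dotProduct_comm, ← dotProduct_mulVec, mulVec_mulVec, mulVec_mulVec,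
    hcoef, one_mulVec, dotProduct_comm]

lemma hasFDerivAt_flatMap {φ : Eb n → ℝ} {X : E n} (hφ : DifferentiableAt ℝ φ (initC X)) :
    HasFDerivAt (flatMap φ) (.id ℝ (E n) + ((fderiv ℝ φ (initC X)).comp (initCLM n)).smulRight
      (EuclideanSpace.single (Fin.last n) 1)) X :=
  (hasFDerivAt_id X).add
    ((HasFDerivAt.comp X hφ.hasFDerivAt (initCLM n).hasFDerivAt).smul_const _)

lemma fderiv_initC_single (φ : Eb n → ℝ) (y : Eb n) (i : Fin (n + 1)) :
    fderiv ℝ φ y (initC (EuclideanSpace.single i 1)) =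
      (Fin.snoc (gradVec φ y) 0 : Fin (n + 1) → ℝ) i := by
  cases i using Fin.lastCases with
  | last => simp [initC_single_last]
  | cast i => simp [initC_single_castSucc, gradVec]

theorem gradVec'_comp_flatMap {φ : Eb n → ℝ} {w : E n → ℝ} {X : E n}
    (hφ : DifferentiableAt ℝ φ (initC X)) (hw : DifferentiableAt ℝ w (flatMap φ X)) :
    gradVec' (w ∘ flatMap φ) X =
      (flatJacobian (gradVec φ (initC X)))ᵀ *ᵥ gradVec' w (flatMap φ X) := by
  funext i
  rw [gradVec', (hw.hasFDerivAt.comp X (hasFDerivAt_flatMap hφ)).fderiv]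
  simp [flatJacobian, transpose_vecMulVec, add_mulVec, vecMulVec_mulVec, initCLM_apply,
    fderiv_initC_single, gradVec', mul_comm]

theorem setIntegral_coefMat_mulVec_gradVec'_comp_flatMap {φ : Eb n → ℝ} {u ψ : E n → ℝ}
    {U : Set (E n)} (hφ : Differentiable ℝ φ) (hU : MeasurableSet U)
    (hu : ∀ x ∈ U, DifferentiableAt ℝ u x) (hψ : ∀ x ∈ U, DifferentiableAt ℝ ψ x) :
    ∫ X in flatMap φ ⁻¹' U,
        (coefMat (gradVec φ (initC X)) *ᵥ gradVec' (u ∘ flatMap φ) X) ⬝ᵥ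
          gradVec' (ψ ∘ flatMap φ) X =
      ∫ x in U, gradVec' u x ⬝ᵥ gradVec' ψ x := by
  have hΦ := measurePreserving_flatMap hφ.continuous.measurable
  have hemb : MeasurableEmbedding (flatMap φ) :=
    (flatHomeomorph φ hφ.continuous).measurableEmbedding
  rw [← hΦ.setIntegral_preimage_emb hemb fun x => gradVec' u x ⬝ᵥ gradVec' ψ x]
  refine setIntegral_congr_fun (hΦ.measurable hU) fun X hX => ?_
  simp only [gradVec'_comp_flatMap (hφ _) (hu _ hX), gradVec'_comp_flatMap (hφ _) (hψ _ hX),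
    coefMat_mulVec_dotProduct]

end FlatteningMap

theorem pullback_harmonic_is_weak_solution_general
    {n : ℕ} (φ : Eb n → ℝ) (hφ : ContDiff ℝ 1 φ)
    (U : Set (E n)) (hU : IsOpen U)
    (u : E n → ℝ) (hu : IsHarmonicOn u U) :
    ContDiffOn ℝ 1 (u ∘ flatMap φ) (flatMap φ ⁻¹' U) ∧
    ∀ ζ : E n → ℝ, ContDiff ℝ 1 ζ → HasCompactSupport ζ →
      tsupport ζ ⊆ flatMap φ ⁻¹' U →
      ∫ X in flatMap φ ⁻¹' U,
        ((coefMat (gradVec φ (initC X))).mulVec (gradVec' (u ∘ flatMap φ) X)) ⬝ᵥ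
          (gradVec' ζ X) = 0 := by
  refine ⟨(hu.1.of_le one_le_two).comp (contDiff_flatMap hφ).contDiffOn fun _ hX => hX, ?_⟩
  intro ζ hζ hc hs
  let e := flatHomeomorph φ hφ.continuous
  let ψ : E n → ℝ := ζ ∘ e.symm
  have hψ : ContDiff ℝ 1 ψ := hζ.comp (contDiff_flatMap hφ.neg)
  have hψ_comp : ψ ∘ flatMap φ = ζ := funext fun X => congrArg ζ (e.symm_apply_apply X)
  have hψ_supp : tsupport ψ ⊆ U := by
    rw [tsupport_comp_eq_preimage]
    intro x hx
    have hmem : flatMap φ (e.symm x) ∈ U := hs hx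
    rwa [show flatMap φ (e.symm x) = x from e.apply_symm_apply x] at hmem
  have hpull := setIntegral_coefMat_mulVec_gradVec'_comp_flatMap
    (hφ.differentiable one_ne_zero) hU.measurableSet
    (fun x hx => hu.differentiableAt hU hx) (fun x _ => hψ.differentiable one_ne_zero x)
  rw [hψ_comp] at hpull
  rw [hpull, hu.setIntegral_gradVec'_dotProduct_eq_zero hU hψ (hc.comp_homeomorph e.symm) hψ_supp]

/-- if `u` is harmonic on an open set `U ⊆ ℝ^{n+1}` and `Φ(y,s) = (y, s+φ(y))`
is the graph-flattening map of a `C¹` function `φ`, then `v = u ∘ Φ` is `C¹` on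
`W = Φ⁻¹(U)` and is a weak solution of `−div(A(y)∇v) = 0` on `W`:
`∫_W ⟨A(y)∇v, ∇ζ⟩ = 0` for every smooth compactly supported test function `ζ` in `W`. -/
theorem pullback_harmonic_is_weak_solution
    {n : ℕ} (hn : 1 ≤ n)
    (φ : Eb n → ℝ) (hφ : ContDiff ℝ 1 φ)
    (U : Set (E n)) (hU : IsOpen U)
    (u : E n → ℝ) (hu : IsHarmonicOn u U) :
    ContDiffOn ℝ 1 (u ∘ flatMap φ) (flatMap φ ⁻¹' U) ∧
    ∀ ζ : E n → ℝ, ContDiff ℝ (⊤ : ℕ∞) ζ → HasCompactSupport ζ →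
      tsupport ζ ⊆ flatMap φ ⁻¹' U →
      ∫ X in flatMap φ ⁻¹' U,
        ((coefMat (gradVec φ (initC X))).mulVec (gradVec' (u ∘ flatMap φ) X)) ⬝ᵥ
          (gradVec' ζ X) = 0 := by
  obtain ⟨hC1, hweak⟩ := pullback_harmonic_is_weak_solution_general φ hφ U hU u hu
  exact ⟨hC1, fun ζ hζ => hweak ζ (hζ.of_le (by exact_mod_cast le_top))⟩
end
end
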